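/- Let R be a noetherian regular ring of characteristic p, I = (g1,…,gt), and e ≥ 0. Let Ȟ^j_e denote the image of H^j(Č^•(g;R)_e) in H^j_I(R) under the map induced by inclusion of the e-th truncated Čech complex. Then Ȟ^j_e ≅ ker(δ^j_e)/(im(δ^{j-1}) ∩ ker(δ^j_e)), where δ^j_e is the j-th differential of the truncation and δ^{j-1} the (j-1)-st Čech differential, and F(Ȟ^j_e) ≅ Ȟ^j_{e+1}. In particular each Ȟ^j_e is a finitely generated R-module and H^j_I(R) = ∪_e Ȟ^j_e. -/

import Mathlib

open IsLocalRing

/-- A noetherian local ring is regular if its Krull dimension equals the dimension of its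
cotangent space over the residue field. -/
def IsRegularLocalRingStmt (A : Type u) [CommRing A] [IsLocalRing A] : Prop :=
  ringKrullDim A = (Module.finrank (ResidueField A) (CotangentSpace A) : WithBot (WithTop ℕ))

/-- A commutative ring is regular if it is noetherian and all of its localizations at
primes are regular local rings. -/
def IsRegularRingStmt (R : Type u) [CommRing R] : Prop :=
  IsNoetherianRing R ∧
    ∀ (P : Ideal R) [P.IsPrime], IsRegularLocalRingStmt (Localization.AtPrime P)

section Cech

variable {R : Type} [CommRing R] {t : ℕ}

/-- The product `g_{j1} ⋯ g_{ji}` indexed by a finite set `s` of indices. -/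
abbrev cechProd (g : Fin t → R) (s : Finset (Fin t)) : R := ∏ j ∈ s, g j

/-- The degree `j` term of the Čech complex of `R` on `g1, …, gt`. -/
abbrev CechTerm (g : Fin t → R) (j : ℕ) : Type :=
  (s : {s : Finset (Fin t) // s.card = j}) → Localization.Away (cechProd g s.1)

/-- The canonical `R`-linear localization map `R_{g_s} → R_{g_{s'}}` for `s ⊆ s'`. -/
noncomputable def cechρ (g : Fin t → R) {s s' : Finset (Fin t)} (h : s ⊆ s') :
    Localization.Away (cechProd g s) →ₗ[R] Localization.Away (cechProd g s') where
  toFun := IsLocalization.Away.lift (P := Localization.Away (cechProd g s'))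
    (g := algebraMap R (Localization.Away (cechProd g s'))) (cechProd g s)
    (IsLocalization.Away.isUnit_of_dvd _ (Finset.prod_dvd_prod_of_subset _ _ _ h))
  map_add' := fun x y => map_add _ x y
  map_smul' := fun r x => by
    simp only [RingHom.id_apply, Algebra.smul_def]
    rw [map_mul, IsLocalization.Away.lift_eq]

/-- The Čech differential with its alternating signs. -/
noncomputable def cechD (g : Fin t → R) (j : ℕ) :
    CechTerm g j →ₗ[R] CechTerm g (j + 1) :=
  LinearMap.pi fun s' =>
    ∑ ℓ ∈ (s' : Finset (Fin t)).attach,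
      ((-1 : R) ^ ((s'.1.filter (fun m => m < ℓ.1)).card)) •
        ((cechρ g (Finset.erase_subset ℓ.1 s'.1)).comp
          (LinearMap.proj (⟨s'.1.erase ℓ.1, by
            simp [Finset.card_erase_of_mem ℓ.2, s'.2]⟩ :
              {s : Finset (Fin t) // s.card = j})))

/-- The `q`-th truncation of the Čech complex. -/
noncomputable def cechTrunc (g : Fin t → R) (q : ℕ) (j : ℕ) : Submodule R (CechTerm g j) :=
  Submodule.pi Set.univ fun s =>
    Submodule.span R
      {(IsLocalization.Away.invSelf (S := Localization.Away (cechProd g s.1))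
        (cechProd g s.1)) ^ q}

/-- The image of the previous Čech differential (zero in degree `0`). -/
noncomputable def cechPrevRange (g : Fin t → R) : (j : ℕ) → Submodule R (CechTerm g j)
  | 0 => ⊥
  | jj + 1 => LinearMap.range (cechD g jj)

/-- The `j`-th (Čech) local cohomology module `H^j_I(R)` for `I = (g1, …, gt)`. -/
abbrev cechH (g : Fin t → R) (j : ℕ) : Type :=
  ↥(LinearMap.ker (cechD g j)) ⧸
    Submodule.comap (LinearMap.ker (cechD g j)).subtype (cechPrevRange g j)

/-- `Ȟ^j_e`, the image of the cohomology of the `e`-th truncated Čech complex in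
`H^j_I(R)`. -/
noncomputable def cechHTrunc (g : Fin t → R) (q : ℕ) (j : ℕ) :
    Submodule R (cechH g j) :=
  Submodule.map
    (Submodule.comap (LinearMap.ker (cechD g j)).subtype (cechPrevRange g j)).mkQ
    (Submodule.comap (LinearMap.ker (cechD g j)).subtype (cechTrunc g q j))

end Cech

/-!
The Frobenius of a regular ring of characteristic `p` is flat. This is local, and over a regular
local ring the maximal ideal is generated by a regular sequence `x₁, …, xₙ`. The `p`-th powers
`xᵢᵖ` again form a regular sequence, that is, `x₁, …, xₙ` is regular on `R` regarded as a module
over itself through Frobenius, so `Tor₁` of the residue field with this module vanishes and the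
local criterion of flatness applies.

Frobenius maps `g i` to `g i ^ p`, and inverting `g i ^ p` is the same as inverting `g i`, so the
Čech complex on `g` base changes along Frobenius to itself. This base change takes `1 / g_s ^ q`
to `1 / g_s ^ (p * q)`, hence the `e`-th truncation to the `(e + 1)`-st. Finally, `Ȟ^j_e` is the
image of `ker δ^j_e` in the cokernel of `δ^{j-1}`, and flat base change preserves kernels, ranges
and intersections.
-/

open RingTheory.Sequence

section TorOne

open LinearMap TensorProduct

variable {R : Type*} [CommRing R] (M : Type*) [AddCommGroup M] [Module R M]

/-- The vanishing of `Tor₁^R(M, R ⧸ I)`, encoded as the injectivity of `M ⊗ I → M ⊗ R`. -/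
def TorOneVanishes (I : Ideal R) : Prop :=
  Function.Injective (I.subtype.lTensor M)

variable {M}

-- Right exactness of `M ⊗ -` on `I.comap f → I × P → I ⊔ range f → 0`.
lemma exists_lTensor_comap_of_lTensor_eq {N P : Type*} [AddCommGroup N] [Module R N]
    [AddCommGroup P] [Module R P] {I : Submodule R N} {f : P →ₗ[R] N}
    (hinj : Function.Injective ((I ⊔ range f).subtype.lTensor M)) {z : M ⊗[R] I} {w : M ⊗[R] P}
    (hzw : I.subtype.lTensor M z = f.lTensor M w) :
    ∃ v : M ⊗[R] I.comap f, (f.restrict (p := I.comap f) (q := I) fun _ h => h).lTensor M v = z ∧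
      (I.comap f).subtype.lTensor M v = w := by
  let α : I.comap f →ₗ[R] I × P := (f.restrict fun _ h => h).prod (I.comap f).subtype
  let β : I × P →ₗ[R] ↥(I ⊔ range f) :=
    (Submodule.inclusion le_sup_left).coprod
      (-(f.codRestrict _ fun x => Submodule.mem_sup_right (mem_range_self f x)))
  have hβ : Function.Surjective β := by
    rintro ⟨y, hy⟩
    obtain ⟨i, hi, _, ⟨x, rfl⟩, rfl⟩ := Submodule.mem_sup.1 hy
    exact ⟨(⟨i, hi⟩, -x), Subtype.ext <| by simp [β]⟩
  have hαβ : Function.Exact α β := by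
    rintro ⟨i, x⟩
    have hβ_zero : β (i, x) = 0 ↔ (i : N) = f x := by
      simp [β, Subtype.ext_iff, ← sub_eq_add_neg, sub_eq_zero]
    rw [hβ_zero]
    refine ⟨fun h => ⟨⟨x, by simp [← h]⟩, Prod.ext (Subtype.ext h.symm) rfl⟩, ?_⟩
    rintro ⟨y, hy⟩
    obtain ⟨rfl, rfl⟩ := Prod.ext_iff.1 hy
    rfl
  have hzero : β.lTensor M ((inl R I P).lTensor M z + (inr R I P).lTensor M w) = 0 := by
    apply hinj
    rw [map_zero, map_add, map_add]
    simp only [← comp_apply, ← lTensor_comp]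
    have hl : (I ⊔ range f).subtype ∘ₗ β ∘ₗ inl R I P = I.subtype := by ext; simp [β]
    have hr : (I ⊔ range f).subtype ∘ₗ β ∘ₗ inr R I P = -f := by ext; simp [β]
    rw [hl, hr, lTensor_neg, LinearMap.neg_apply, hzw, add_neg_cancel]
  obtain ⟨v, hv⟩ := (lTensor_exact M hαβ hβ _).1 hzero
  have hfst := congr((fst R I P).lTensor M $hv)
  have hsnd := congr((snd R I P).lTensor M $hv)
  simp only [map_add, ← comp_apply, ← lTensor_comp, fst_comp_inl, fst_comp_inr, snd_comp_inl,
    snd_comp_inr, lTensor_id, lTensor_zero, id_apply, LinearMap.zero_apply, add_zero,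
    zero_add] at hfst hsnd
  exact ⟨v, hfst, hsnd⟩

lemma exists_lTensor_add_lTensor_of_surjective_coprod {N P Q : Type*} [AddCommGroup N]
    [Module R N] [AddCommGroup P] [Module R P] [AddCommGroup Q] [Module R Q] {f : N →ₗ[R] Q}
    {g : P →ₗ[R] Q} (h : Function.Surjective (f.coprod g)) (y : M ⊗[R] Q) :
    ∃ z w, f.lTensor M z + g.lTensor M w = y := by
  obtain ⟨u, rfl⟩ := lTensor_surjective M h y
  refine ⟨(fst R N P).lTensor M u, (snd R N P).lTensor M u, ?_⟩
  rw [← comp_apply, ← comp_apply, ← lTensor_comp, ← lTensor_comp, ← LinearMap.add_apply,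
    ← lTensor_add, coprod]

lemma TorOneVanishes.of_colon {I : Ideal R} {b : R}
    (hcolon : TorOneVanishes M (Submodule.comap (lsmul R R b) I))
    (hsup : TorOneVanishes M (I ⊔ range (lsmul R R b))) : TorOneVanishes M I := by
  refine (injective_iff_map_eq_zero _).2 fun z hz => ?_
  obtain ⟨v, rfl, hv⟩ := exists_lTensor_comap_of_lTensor_eq hsup (hz.trans (map_zero _).symm)
  rw [hcolon (hv.trans (map_zero _).symm), map_zero]

lemma TorOneVanishes.sup_range_lsmul {J : Ideal R} {x : R} (hJ : TorOneVanishes M J)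
    (hx : IsSMulRegular (M ⧸ (J • ⊤ : Submodule R M)) x) :
    TorOneVanishes M (J ⊔ range (lsmul R R x)) := by
  have hreg : IsSMulRegular (M ⊗[R] (R ⧸ J)) x :=
    ((tensorQuotEquivQuotSMul M J).isSMulRegular_congr x).2 hx
  let μ : R →ₗ[R] ↥(J ⊔ range (lsmul R R x)) :=
    (lsmul R R x).codRestrict _ fun r => Submodule.mem_sup_right (mem_range_self _ r)
  let ι : J →ₗ[R] ↥(J ⊔ range (lsmul R R x)) := Submodule.inclusion le_sup_left
  have hsurj : Function.Surjective (ι.coprod μ) := by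
    rintro ⟨y, hy⟩
    obtain ⟨i, hi, _, ⟨r, rfl⟩, rfl⟩ := Submodule.mem_sup.1 hy
    exact ⟨(⟨i, hi⟩, r), rfl⟩
  refine (injective_iff_map_eq_zero _).2 fun y hy => ?_
  obtain ⟨z, w, rfl⟩ := exists_lTensor_add_lTensor_of_surjective_coprod (M := M) hsurj y
  have hμ : (J ⊔ range (lsmul R R x)).subtype ∘ₗ μ = x • LinearMap.id := by ext; rfl
  have hμι : μ ∘ₗ J.subtype = x • ι := by ext; rfl
  have hzw : J.subtype.lTensor M z + x • w = 0 := by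
    rw [← hy, map_add, ← comp_apply, ← comp_apply, ← lTensor_comp, ← lTensor_comp, hμ, lTensor_smul,
      lTensor_id]
    rfl
  obtain ⟨z', rfl⟩ : w ∈ range (J.subtype.lTensor M) := by
    have hexact := lTensor_exact M (exact_subtype_mkQ J) J.mkQ_surjective
    refine (hexact w).1 (hreg ?_)
    simp only [smul_zero, ← map_smul]
    exact (hexact _).2 ⟨-z, by rw [map_neg, eq_neg_of_add_eq_zero_right hzw]⟩
  obtain rfl : z = -(x • z') := hJ <| by
    rw [map_neg, map_smul, eq_neg_of_add_eq_zero_left hzw]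
  rw [← comp_apply, ← lTensor_comp, hμι, lTensor_smul, LinearMap.smul_apply, map_neg, map_smul,
    neg_add_cancel]

lemma torOneVanishes_bot : TorOneVanishes M (⊥ : Ideal R) :=
  Function.injective_of_subsingleton _

lemma torOneVanishes_top : TorOneVanishes M (⊤ : Ideal R) :=
  (LinearEquiv.lTensor M Submodule.topEquiv).injective

lemma TorOneVanishes.of_isWeaklyRegular {rs : List R} (hrs : IsWeaklyRegular M rs) :
    TorOneVanishes M (Ideal.ofList rs) := by
  induction rs using List.reverseRecOn with
  | nil => exact Ideal.ofList_nil (R := R) ▸ torOneVanishes_bot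
  | append_singleton rs x ih =>
    obtain ⟨hinit, hlast⟩ := (isWeaklyRegular_append_iff _ _ _).1 hrs
    convert (ih hinit).sup_range_lsmul ((isWeaklyRegular_singleton_iff _ _).1 hlast)
    rw [Ideal.ofList_append, Ideal.ofList_singleton]
    congr 1
    ext y
    simp [Ideal.mem_span_singleton, dvd_def, eq_comm]

lemma TorOneVanishes.of_pow_le [IsNoetherianRing R] {m : Ideal R} [m.IsMaximal]
    (hm : TorOneVanishes M m) {n : ℕ} (I : Ideal R) (hI : m ^ n ≤ I) : TorOneVanishes M I := by
  induction I using IsNoetherian.induction with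
  | hgt I ih =>
  by_cases hItop : I = ⊤
  · exact hItop ▸ torOneVanishes_top
  obtain ⟨k, hk, hk'⟩ : ∃ k, ¬ m ^ k ≤ I ∧ m ^ (k + 1) ≤ I := by
    have hzero : ¬ m ^ 0 ≤ I := by simpa using hItop
    by_contra! h
    exact (Nat.rec hzero h n : ¬ m ^ n ≤ I) hI
  obtain ⟨b, hbm, hbI⟩ := SetLike.not_le_iff_exists.1 hk
  refine .of_colon (b := b) ?_ (ih _ ?_ ?_)
  · convert hm
    refine (Ideal.IsMaximal.eq_of_le ‹_› ?_ fun x hx => ?_).symm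
    · exact fun h => hbI (by simpa using (Ideal.eq_top_iff_one _).1 h)
    · exact hk' (by simpa [pow_succ] using Ideal.mul_mem_mul hbm hx)
  · exact left_lt_sup.2 fun h => hbI (h ⟨1, by simp⟩)
  · exact hI.trans le_sup_left

lemma lTensor_mem_smul_top {N P : Type*} [AddCommGroup N] [Module R N] [AddCommGroup P]
    [Module R P] {I : Ideal R} {f : N →ₗ[R] P} (hf : range f ≤ I • ⊤) (v : M ⊗[R] N) :
    f.lTensor M v ∈ (I • ⊤ : Submodule R (M ⊗[R] P)) := by
  induction v with
  | zero => simp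
  | add v w hv hw => simpa using add_mem hv hw
  | tmul m n =>
    rw [lTensor_tmul]
    have := Submodule.mem_map_of_mem (f := TensorProduct.mk R M P m) (hf (mem_range_self f n))
    rw [Submodule.map_smul''] at this
    exact Submodule.smul_mono le_rfl le_top this

theorem TorOneVanishes.flat [IsNoetherianRing R] {m : Ideal R} [m.IsMaximal]
    (S : Type*) [CommRing S] [IsNoetherianRing S] [Algebra R S]
    (hmS : m.map (algebraMap R S) ≤ Ideal.jacobson ⊥) [Module S M] [IsScalarTower R S M]
    [Module.Finite S M] (hm : TorOneVanishes M m) : Module.Flat R M := by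
  refine Module.Flat.iff_lTensor_injective'.2 fun I =>
    (injective_iff_map_eq_zero _).2 fun z hz => ?_
  have : Module.Finite S (M ⊗[R] I) :=
    .equiv (AlgebraTensorModule.cancelBaseChange R S S M I)
  suffices hz_mem : z ∈ (⨅ i : ℕ, m.map (algebraMap R S) ^ i • ⊤ : Submodule S (M ⊗[R] I)) by
    rwa [Ideal.iInf_pow_smul_eq_bot_of_le_jacobson _ hmS, Submodule.mem_bot] at hz_mem
  obtain ⟨k, hk⟩ := Ideal.exists_pow_inf_eq_pow_smul m I
  refine Submodule.mem_iInf _ |>.2 fun i => ?_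
  have hTor : TorOneVanishes M (I ⊔ range (m ^ (i + k)).subtype) :=
    hm.of_pow_le _ (by rw [Submodule.range_subtype]; exact le_sup_right)
  obtain ⟨v, rfl, -⟩ := exists_lTensor_comap_of_lTensor_eq hTor (hz.trans (map_zero _).symm)
  rw [← Ideal.map_pow, ← Submodule.restrictScalars_mem R, Ideal.smul_restrictScalars,
    Submodule.restrictScalars_top]
  refine lTensor_mem_smul_top ?_ v
  rintro _ ⟨⟨⟨x, hx⟩, hxI⟩, rfl⟩
  rw [Submodule.mem_smul_top_iff]
  have hxk : x ∈ m ^ i • (m ^ k • ⊤ ⊓ I) := by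
    have hxIk : x ∈ m ^ (i + k) • ⊤ ⊓ I := ⟨by simpa using hx, hxI⟩
    rwa [hk _ (Nat.le_add_left k i), Nat.add_sub_cancel] at hxIk
  exact Submodule.smul_mono le_rfl inf_le_right hxk

end TorOne

lemma isWeaklyRegular_map_pow {R M : Type*} [CommRing R] [IsLocalRing R] [AddCommGroup M]
    [Module R M] [IsNoetherian R M] {rs : List R} (hrs : IsWeaklyRegular M rs)
    (hmem : ∀ r ∈ rs, r ∈ maximalIdeal R) {n : ℕ} (hn : n ≠ 0) :
    IsWeaklyRegular M (rs.map (· ^ n)) := by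
  induction rs generalizing M with
  | nil => exact .nil R M
  | cons r rs ih =>
    rw [List.forall_mem_cons] at hmem
    have hrot : IsWeaklyRegular M (rs ++ [r]) :=
      isWeaklyRegular_of_perm_of_subset_maximalIdeal hrs (List.perm_append_singleton r rs).symm
        (List.forall_mem_cons.2 hmem)
    have hrot_pow : IsWeaklyRegular M (rs ++ [r ^ n]) := by
      rw [isWeaklyRegular_append_iff, isWeaklyRegular_singleton_iff] at hrot ⊢
      exact ⟨hrot.1, hrot.2.pow n⟩
    have hcons_pow : IsWeaklyRegular M (r ^ n :: rs) :=
      isWeaklyRegular_of_perm_of_subset_maximalIdeal hrot_pow (List.perm_append_singleton _ rs)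
        (by simpa [or_imp, forall_and] using ⟨hmem.2, Ideal.pow_mem_of_mem _ hmem.1 n (by lia)⟩)
    rw [isWeaklyRegular_cons_iff] at hcons_pow
    exact (isWeaklyRegular_cons_iff M _ _).2 ⟨hcons_pow.1, ih hcons_pow.2 hmem.2⟩

lemma flat_of_isWeaklyRegular_of_ofList_eq {R S : Type*} [CommRing R] [IsLocalRing R]
    [IsNoetherianRing R] [CommRing S] [IsLocalRing S] [IsNoetherianRing S] (φ : R →+* S)
    [IsLocalHom φ] {rs : List R} (hspan : Ideal.ofList rs = maximalIdeal R)
    (hrs : IsWeaklyRegular S (rs.map φ)) : φ.Flat := by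
  algebraize [φ]
  have hTor : TorOneVanishes S (maximalIdeal R) :=
    hspan ▸ .of_isWeaklyRegular ((isWeaklyRegular_map_algebraMap_iff S S rs).1 hrs)
  exact hTor.flat S ((map_maximalIdeal_le φ).trans (maximalIdeal_le_jacobson _))

section RegularLocalRing

universe u

variable {R : Type u} [CommRing R]

lemma exists_mem_maximalIdeal_notMem_sq_notMem_minimalPrimes [IsLocalRing R] [IsNoetherianRing R]
    (hR : maximalIdeal R ∉ minimalPrimes R) :
    ∃ x ∈ maximalIdeal R, x ∉ maximalIdeal R ^ 2 ∧ ∀ Q ∈ minimalPrimes R, x ∉ Q := by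
  classical
  have hfin : (minimalPrimes R).Finite := minimalPrimes.finite_of_isNoetherianRing R
  by_contra! hcon
  have hsub : (maximalIdeal R : Set R) ⊆
      ⋃ I ∈ (insert (maximalIdeal R ^ 2) hfin.toFinset : Finset (Ideal R)), (I : Set R) := by
    intro y hy
    by_cases hy2 : y ∈ maximalIdeal R ^ 2
    · exact Set.mem_biUnion (Finset.mem_insert_self _ _) hy2
    · obtain ⟨Q, hQ, hyQ⟩ := hcon y hy hy2
      exact Set.mem_biUnion (Finset.mem_insert_of_mem (hfin.mem_toFinset.2 hQ)) hyQ
  obtain ⟨I, hI, hle⟩ := (Ideal.subset_union_prime (maximalIdeal R ^ 2) (maximalIdeal R ^ 2)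
    fun I hI hne _ => (hfin.mem_toFinset.1 (Finset.mem_of_mem_insert_of_ne hI hne)).1.1).1 hsub
  rcases Finset.mem_insert.1 hI with rfl | hI
  · have hbot : maximalIdeal R = ⊥ :=
      Submodule.eq_bot_of_le_smul_of_le_jacobson_bot (maximalIdeal R) _
        (IsNoetherian.noetherian _) (by simpa [pow_two] using hle) (maximalIdeal_le_jacobson _)
    have := (isField_iff_maximalIdeal_eq.2 hbot).isDomain
    exact hR (by simp [hbot, IsDomain.minimalPrimes_eq_singleton_bot])
  · have hI := hfin.mem_toFinset.1 hI
    exact hR (le_antisymm (le_maximalIdeal hI.1.1.ne_top) hle ▸ hI)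

lemma exists_span_insert_eq_maximalIdeal [IsLocalRing R] [IsNoetherianRing R] {x : R}
    (hx : x ∈ maximalIdeal R) (hx2 : x ∉ maximalIdeal R ^ 2) :
    ∃ s : Finset R, s.card + 1 = (maximalIdeal R).spanFinrank ∧
      Ideal.span (insert x (s : Set R)) = maximalIdeal R := by
  classical
  obtain ⟨s, hcard, hs⟩ :=
    (IsNoetherian.noetherian (maximalIdeal R)).exists_span_finset_card_eq_spanFinrank
  have hs_mem : ∀ a ∈ s, a ∈ maximalIdeal R := fun a ha => hs ▸ Submodule.subset_span ha
  obtain ⟨c, -, hc⟩ := Submodule.mem_span_finset.1 (hs.symm ▸ hx)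
  obtain ⟨y, hy, hcy⟩ : ∃ y ∈ s, IsUnit (c y) := by
    by_contra! hcon
    refine hx2 (hc ▸ pow_two (maximalIdeal R) ▸ Ideal.sum_mem _ fun a ha => ?_)
    exact Ideal.mul_mem_mul ((mem_maximalIdeal _).2 (hcon a ha)) (hs_mem a ha)
  refine ⟨s.erase y, by rw [Finset.card_erase_add_one hy, hcard], le_antisymm ?_ ?_⟩
  · refine Ideal.span_le.2 (Set.insert_subset hx fun a ha => hs_mem a (Finset.mem_of_mem_erase ha))
  · set J := Ideal.span (insert x (s.erase y : Set R))
    have hmem_erase : ∀ a ∈ s.erase y, a ∈ J := fun a ha =>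
      Ideal.subset_span (Set.mem_insert_of_mem _ ha)
    have hy_mem : y ∈ J := by
      refine (J.unit_mul_mem_iff_mem hcy).1 ?_
      rw [← smul_eq_mul, eq_sub_of_add_eq ((Finset.add_sum_erase s _ hy).trans hc)]
      exact sub_mem (Ideal.subset_span (Set.mem_insert _ _))
        (Ideal.sum_mem _ fun a ha => J.mul_mem_left _ (hmem_erase a ha))
    rw [← hs]
    refine Submodule.span_le.2 fun a ha => ?_
    obtain rfl | hay := eq_or_ne a y
    · exact hy_mem
    · exact hmem_erase a (Finset.mem_erase.2 ⟨hay, ha⟩)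

lemma spanFinrank_map_maximalIdeal_add_one_le [IsLocalRing R] [IsNoetherianRing R] {x : R}
    (hx : x ∈ maximalIdeal R) (hx2 : x ∉ maximalIdeal R ^ 2) :
    ((maximalIdeal R).map (Ideal.Quotient.mk (Ideal.span {x}))).spanFinrank + 1 ≤
      (maximalIdeal R).spanFinrank := by
  classical
  obtain ⟨s, hcard, hs⟩ := exists_span_insert_eq_maximalIdeal hx hx2
  have hmap : (maximalIdeal R).map (Ideal.Quotient.mk (Ideal.span {x})) =
      Ideal.span (Ideal.Quotient.mk (Ideal.span {x}) '' s) := by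
    rw [← hs, Ideal.map_span, Set.image_insert_eq, Ideal.Quotient.mk_singleton_self,
      Ideal.span_insert_zero]
  rw [hmap, ← hcard, Nat.add_le_add_iff_right, ← Set.ncard_coe_finset]
  exact (Submodule.spanFinrank_span_le_ncard_of_finite (s.finite_toSet.image _)).trans
    (Set.ncard_image_le s.finite_toSet)

lemma isRegularLocalRing_quotient_span_singleton [IsRegularLocalRing R] {x : R}
    (hx : x ∈ maximalIdeal R) (hx2 : x ∉ maximalIdeal R ^ 2) :
    IsRegularLocalRing (R ⧸ Ideal.span {x}) := by
  have : Nontrivial (R ⧸ Ideal.span {x}) := Ideal.Quotient.nontrivial_iff.2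
    (ne_top_of_le_ne_top Ideal.IsPrime.ne_top' ((Ideal.span_singleton_le_iff_mem _).2 hx))
  have : IsLocalRing (R ⧸ Ideal.span {x}) :=
    .of_surjective' _ Ideal.Quotient.mk_surjective
  refine .of_spanFinrank_maximalIdeal_le _ ?_
  have hdim := Ideal.height_le_ringKrullDim_quotient_add_one hx
  rw [maximalIdeal_height_eq_ringKrullDim, ← IsRegularLocalRing.spanFinrank_maximalIdeal] at hdim
  rw [← ENat.WithBot.add_le_add_one_right_iff,
    ← map_maximalIdeal_of_surjective _ (Ideal.Quotient.mk_surjective (I := Ideal.span {x}))]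
  exact le_trans (mod_cast spanFinrank_map_maximalIdeal_add_one_le hx hx2) hdim

theorem regularLocalRing_induction {motive : ∀ (R : Type u) [CommRing R], Prop}
    (field : ∀ (R : Type u) [CommRing R], IsField R → motive R)
    (quotient : ∀ (R : Type u) [CommRing R] [IsRegularLocalRing R] (x : R), x ∈ maximalIdeal R →
      x ∉ maximalIdeal R ^ 2 → (∀ Q ∈ minimalPrimes R, x ∉ Q) →
      motive (R ⧸ Ideal.span {x}) → motive R)
    (R : Type u) [CommRing R] [IsRegularLocalRing R] : motive R := by
  induction hn : (maximalIdeal R).spanFinrank using Nat.strong_induction_on generalizing R with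
  | _ n ih =>
    by_cases hmin : maximalIdeal R ∈ minimalPrimes R
    · have hdim := IsRegularLocalRing.spanFinrank_maximalIdeal (R := R)
      rw [← maximalIdeal_height_eq_ringKrullDim, Ideal.height_eq_zero_iff.2 hmin] at hdim
      refine field R (isField_iff_maximalIdeal_eq.2 ?_)
      exact (Submodule.spanFinrank_eq_zero_iff_eq_bot (IsNoetherian.noetherian _)).1
        (by exact_mod_cast hdim)
    · obtain ⟨x, hx, hx2, hxmin⟩ :=
        exists_mem_maximalIdeal_notMem_sq_notMem_minimalPrimes hmin
      have := isRegularLocalRing_quotient_span_singleton hx hx2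
      have hlt := spanFinrank_map_maximalIdeal_add_one_le hx hx2
      rw [map_maximalIdeal_of_surjective _ Ideal.Quotient.mk_surjective, hn] at hlt
      exact quotient R x hx hx2 hxmin (ih _ hlt _ rfl)

lemma isDomain_of_isPrime_span_singleton [IsLocalRing R] [IsNoetherianRing R] {x : R}
    (hx : x ∈ maximalIdeal R) (hprime : (Ideal.span {x}).IsPrime)
    (hxmin : ∀ Q ∈ minimalPrimes R, x ∉ Q) : IsDomain R := by
  obtain ⟨Q, hQ, hQx⟩ := Ideal.exists_minimalPrimes_le (bot_le (a := Ideal.span {x}))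
  have hQprime : Q.IsPrime := hQ.1.1
  have hQ_le : Q ≤ Ideal.span {x} • Q := by
    intro q hq
    obtain ⟨a, rfl⟩ := Ideal.mem_span_singleton.1 (hQx hq)
    exact Submodule.smul_mem_smul (Ideal.mem_span_singleton_self _)
      ((hQprime.mem_or_mem hq).resolve_left (hxmin Q hQ))
  have hQ_bot : Q = ⊥ :=
    Submodule.eq_bot_of_le_smul_of_le_jacobson_bot _ Q (IsNoetherian.noetherian _) hQ_le
      (((Ideal.span_singleton_le_iff_mem _).2 hx).trans (maximalIdeal_le_jacobson _))
  rw [hQ_bot] at hQprime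
  exact .of_bot_isPrime R

lemma isDomain_of_isRegularLocalRing (R : Type u) [CommRing R] [IsRegularLocalRing R] :
    IsDomain R :=
  regularLocalRing_induction (motive := fun R _ => IsDomain R) (fun _ _ hR => hR.isDomain)
    (fun _ _ _ _ hx _ hxmin hdom => isDomain_of_isPrime_span_singleton hx
      ((Ideal.Quotient.isDomain_iff_prime _).1 hdom) hxmin) R

theorem exists_isWeaklyRegular_ofList_eq_maximalIdeal (R : Type u) [CommRing R]
    [IsRegularLocalRing R] :
    ∃ rs : List R, Ideal.ofList rs = maximalIdeal R ∧ IsWeaklyRegular R rs := by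
  refine regularLocalRing_induction (motive := fun R _ => ∀ [IsLocalRing R],
    ∃ rs : List R, Ideal.ofList rs = maximalIdeal R ∧ IsWeaklyRegular R rs) ?_ ?_ R
  · intro R _ hR _
    exact ⟨[], by rw [Ideal.ofList_nil, isField_iff_maximalIdeal_eq.1 hR], .nil R R⟩
  · intro R _ _ x hx hx2 _ ih _
    have hquot := isRegularLocalRing_quotient_span_singleton hx hx2
    have := isDomain_of_isRegularLocalRing R
    have : IsLocalHom (Ideal.Quotient.mk (Ideal.span {x})) :=
      .of_surjective _ Ideal.Quotient.mk_surjective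
    obtain ⟨ss, hss, hss_reg⟩ := ih
    obtain ⟨rs, rfl⟩ := List.map_surjective_iff.2
      (Ideal.Quotient.mk_surjective (I := Ideal.span {x})) ss
    refine ⟨x :: rs, ?_, (isWeaklyRegular_cons_iff R x rs).2 ⟨?_, ?_⟩⟩
    · rw [← Ideal.map_ofList] at hss
      rw [Ideal.ofList_cons, sup_comm,
        ← maximalIdeal_comap (Ideal.Quotient.mk (Ideal.span {x})), ← hss,
        Ideal.comap_map_of_surjective _ Ideal.Quotient.mk_surjective,
        ← RingHom.ker_eq_comap_bot, Ideal.mk_ker]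
    · exact IsSMulRegular.of_ne_zero fun h => hx2 (h ▸ zero_mem _)
    · refine ((Submodule.quotEquivOfEq _ _ ?_).isWeaklyRegular_congr rs).1
        ((isWeaklyRegular_map_algebraMap_iff _ (R ⧸ Ideal.span {x}) rs).1 hss_reg)
      simpa using Submodule.ideal_span_singleton_smul x (⊤ : Ideal R)

end RegularLocalRing

lemma isRegularRing_of_isRegularRingStmt {R : Type*} [CommRing R] (hR : IsRegularRingStmt R) :
    IsRegularRing R := by
  have := hR.1
  exact isRegularRing_iff.2 fun P hP =>
    (IsRegularLocalRing.iff_finrank_cotangentSpace _).2 (hR.2 P).symm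

theorem flat_frobenius_of_isRegularLocalRing (R : Type*) [CommRing R] [IsRegularLocalRing R]
    (p : ℕ) [ExpChar R p] : (frobenius R p).Flat := by
  obtain ⟨rs, hspan, hreg⟩ := exists_isWeaklyRegular_ofList_eq_maximalIdeal R
  have hlocal : IsLocalHom (frobenius R p) :=
    ⟨fun a ha => (isUnit_pow_iff (expChar_pos R p).ne').1 ha⟩
  refine flat_of_isWeaklyRegular_of_ofList_eq (frobenius R p) hspan ?_
  exact isWeaklyRegular_map_pow hreg (fun r hr => hspan ▸ Ideal.subset_span hr)
    (expChar_pos R p).ne'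

lemma localRingHom_frobenius {R : Type*} [CommRing R] (p : ℕ) [ExpChar R p]
    (P : Ideal R) [P.IsPrime] [ExpChar (Localization.AtPrime P) p]
    (hP : P = P.comap (frobenius R p)) :
    Localization.localRingHom P P (frobenius R p) hP = frobenius (Localization.AtPrime P) p :=
  Localization.localRingHom_unique _ _ _ _ fun a => (RingHom.map_frobenius _ p a).symm

theorem flat_frobenius_of_isRegularRing (R : Type*) [CommRing R] [IsRegularRing R]
    (p : ℕ) [Fact p.Prime] [CharP R p] : (frobenius R p).Flat := by
  refine RingHom.Flat.ofLocalizationPrime _ fun P hP => ?_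
  have hcomap : P.comap (frobenius R p) = P := Ideal.ext fun a =>
    hP.pow_mem_iff_mem _ (Fact.out : p.Prime).pos
  have : CharP (Localization.AtPrime P) p :=
    (CharP.charP_iff_prime_eq_zero Fact.out).2 <| by
      rw [← map_natCast (algebraMap R _), CharP.cast_eq_zero, map_zero]
  suffices ∀ (Q : Ideal R) [Q.IsPrime] (hQ : Q = P.comap (frobenius R p)),
    (Localization.localRingHom Q P (frobenius R p) hQ).Flat from this _ rfl
  intro Q _ hQ
  obtain rfl : Q = P := hQ.trans hcomap
  rw [localRingHom_frobenius]
  exact flat_frobenius_of_isRegularLocalRing _ p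

section ExtendSubmodule

open LinearMap TensorProduct

variable {R S M M' N N' : Type*} [CommRing R] [CommRing S]
  [AddCommGroup M] [Module R M] [AddCommGroup M'] [Module R M']
  [AddCommGroup N] [Module R N] [Module S N]
  [AddCommGroup N'] [Module R N'] [Module S N']

/-- The `S`-submodule of `N` generated by the image of an `R`-submodule `A` of `M`. When `f`
exhibits `N` as `S ⊗[R] M`, this is the image of `S ⊗[R] A`. -/
def extendSubmodule (S : Type*) [CommRing S] [Module S N] (f : M →ₗ[R] N) (A : Submodule R M) :
    Submodule S N :=
  Submodule.span S (f '' A)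

lemma apply_mem_extendSubmodule (f : M →ₗ[R] N) {A : Submodule R M} {a : M} (ha : a ∈ A) :
    f a ∈ extendSubmodule S f A :=
  Submodule.subset_span ⟨a, ha, rfl⟩

lemma extendSubmodule_map {f : M →ₗ[R] N} {f' : M' →ₗ[R] N'} {φ : M →ₗ[R] M'} {ψ : N →ₗ[S] N'}
    (hcomm : ∀ m, f' (φ m) = ψ (f m)) (A : Submodule R M) :
    extendSubmodule S f' (A.map φ) = (extendSubmodule S f A).map ψ := by
  simp only [extendSubmodule, Submodule.map_span, Submodule.map_coe, Set.image_image, hcomm]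

lemma extendSubmodule_pi {ι : Type*} [Finite ι] {M N : ι → Type*}
    [∀ i, AddCommGroup (M i)] [∀ i, Module R (M i)] [∀ i, AddCommGroup (N i)]
    [∀ i, Module R (N i)] [∀ i, Module S (N i)] (f : ∀ i, M i →ₗ[R] N i)
    (A : ∀ i, Submodule R (M i)) :
    extendSubmodule S (.pi fun i => f i ∘ₗ .proj i) (Submodule.pi Set.univ A) =
      Submodule.pi Set.univ fun i => extendSubmodule S (f i) (A i) := by
  classical
  refine le_antisymm (Submodule.span_le.2 ?_) ?_
  · rintro _ ⟨x, hx, rfl⟩ i -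
    exact apply_mem_extendSubmodule (f i) (hx i trivial)
  · rw [← Submodule.iSup_map_single]
    refine iSup_le fun i => ?_
    rw [← extendSubmodule_map (f' := .pi fun i => f i ∘ₗ .proj i) (φ := LinearMap.single R M i)]
    · exact Submodule.span_mono (Set.image_mono (Submodule.map_le_iff_le_comap.2
        (Submodule.le_comap_single_pi A)))
    · exact fun m => funext fun k => Pi.apply_single (fun k => f k) (fun k => map_zero _) i m k

variable [Algebra R S] [IsScalarTower R S N]

lemma extendSubmodule_span (f : M →ₗ[R] N) (s : Set M) :
    extendSubmodule S f (Submodule.span R s) = Submodule.span S (f '' s) := by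
  rw [extendSubmodule, ← Submodule.map_coe, Submodule.map_span, Submodule.span_span_of_tower]

lemma extendSubmodule_top {f : M →ₗ[R] N} (hf : IsBaseChange S f) :
    extendSubmodule S f ⊤ = ⊤ :=
  Submodule.eq_top_iff'.2 fun x => hf.inductionOn x _ (zero_mem _)
    (fun _ => apply_mem_extendSubmodule f trivial) (fun s _ hn => Submodule.smul_mem _ s hn)
    fun _ _ h₁ h₂ => add_mem h₁ h₂

lemma extendSubmodule_range {f : M →ₗ[R] N} {f' : M' →ₗ[R] N'} {φ : M →ₗ[R] M'} {ψ : N →ₗ[S] N'}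
    (hf : IsBaseChange S f) (hcomm : ∀ m, f' (φ m) = ψ (f m)) :
    extendSubmodule S f' (range φ) = range ψ := by
  rw [range_eq_map, extendSubmodule_map hcomm, extendSubmodule_top hf, range_eq_map]

variable [IsScalarTower R S N'] [Module.Flat R S]

lemma extendSubmodule_ker {f : M →ₗ[R] N} {f' : M' →ₗ[R] N'} {φ : M →ₗ[R] M'} {ψ : N →ₗ[S] N'}
    (hf : IsBaseChange S f) (hf' : IsBaseChange S f') (hcomm : ∀ m, f' (φ m) = ψ (f m)) :
    extendSubmodule S f (ker φ) = ker ψ := by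
  let fker : ker φ →ₗ[R] ker ψ := (f.domRestrict (ker φ)).codRestrict ((ker ψ).restrictScalars R)
    fun m => by simp [← hcomm]
  have hfker : IsBaseChange S fker := .of_left_exact S fker f f' rfl (LinearMap.ext hcomm) hf hf'
    (exact_subtype_ker_map φ) (ker φ).injective_subtype
    (exact_subtype_ker_map ψ) (ker ψ).injective_subtype
  rw [← (ker φ).range_subtype, extendSubmodule_range hfker (ψ := (ker ψ).subtype) fun _ => rfl,
    (ker ψ).range_subtype]

/-- The restriction of `f` to a submodule `A` and the `S`-submodule it generates. -/
def toExtendSubmodule (S : Type*) [CommRing S] [Algebra R S] [Module S N] [IsScalarTower R S N]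
    (f : M →ₗ[R] N) (A : Submodule R M) : A →ₗ[R] extendSubmodule S f A :=
  (f.domRestrict A).codRestrict ((extendSubmodule S f A).restrictScalars R)
    fun a => apply_mem_extendSubmodule f a.2

lemma isBaseChange_toExtendSubmodule {f : M →ₗ[R] N} (hf : IsBaseChange S f)
    (A : Submodule R M) : IsBaseChange S (toExtendSubmodule S f A) := by
  have hmap : (A.baseChange S).map (hf.equiv : S ⊗[R] M →ₗ[S] N) = extendSubmodule S f A := by
    simp [Submodule.baseChange_eq_span, Submodule.map_span, Set.image_image, hf.equiv_tmul,
      extendSubmodule]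
  exact .of_equiv ((Submodule.toBaseChange.toLinearEquiv S A).trans
    (hf.equiv.ofSubmodules _ _ hmap)) fun a =>
      Subtype.ext ((hf.equiv_tmul 1 _).trans (one_smul _ _))

/-- The map induced by `f` on the quotient by a submodule `B` and by the `S`-submodule it
generates. -/
def mapExtendSubmoduleQ (S : Type*) [CommRing S] [Algebra R S] [Module S N] [IsScalarTower R S N]
    (f : M →ₗ[R] N) (B : Submodule R M) : M ⧸ B →ₗ[R] N ⧸ extendSubmodule S f B :=
  B.liftQ ((extendSubmodule S f B).mkQ.restrictScalars R ∘ₗ f) fun b hb => by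
    simpa using apply_mem_extendSubmodule f hb

lemma isBaseChange_mapExtendSubmoduleQ {f : M →ₗ[R] N} (hf : IsBaseChange S f)
    (B : Submodule R M) : IsBaseChange S (mapExtendSubmoduleQ S f B) :=
  .of_right_exact S (toExtendSubmodule S f B) f (mapExtendSubmoduleQ S f B) rfl rfl
    (isBaseChange_toExtendSubmodule hf B) hf
    (exact_subtype_mkQ B) B.mkQ_surjective (exact_subtype_mkQ _) (Submodule.mkQ_surjective _)

lemma extendSubmodule_comap_subtype {f : M →ₗ[R] N} (hf : IsBaseChange S f)
    (A B : Submodule R M) :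
    extendSubmodule S (toExtendSubmodule S f A) (B.comap A.subtype) =
      (extendSubmodule S f B).comap (extendSubmodule S f A).subtype := by
  have hker := extendSubmodule_ker (isBaseChange_toExtendSubmodule hf A)
    (isBaseChange_mapExtendSubmoduleQ hf B) (φ := B.mkQ ∘ₗ A.subtype)
    (ψ := (extendSubmodule S f B).mkQ ∘ₗ (extendSubmodule S f A).subtype) fun _ => rfl
  simpa only [ker_comp, Submodule.ker_mkQ] using hker

lemma extendSubmodule_inf {f : M →ₗ[R] N} (hf : IsBaseChange S f) (A B : Submodule R M) :
    extendSubmodule S f (A ⊓ B) = extendSubmodule S f A ⊓ extendSubmodule S f B := by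
  rw [← Submodule.map_comap_subtype, ← Submodule.map_comap_subtype,
    ← extendSubmodule_comap_subtype hf]
  exact extendSubmodule_map (f := toExtendSubmodule S f A) (ψ := (extendSubmodule S f A).subtype)
    (fun _ => rfl) _

theorem nonempty_tensorProduct_map_mkQ_equiv {f : M →ₗ[R] N} (hf : IsBaseChange S f)
    {A B : Submodule R M} {A' B' : Submodule S N} (hA : extendSubmodule S f A = A')
    (hB : extendSubmodule S f B = B') :
    Nonempty (S ⊗[R] A.map B.mkQ ≃ₗ[S] A'.map B'.mkQ) := by
  subst hA hB
  have hbase := isBaseChange_toExtendSubmodule (isBaseChange_mapExtendSubmoduleQ hf B)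
    (A.map B.mkQ)
  have hmap := extendSubmodule_map (f := f) (f' := mapExtendSubmoduleQ S f B) (φ := B.mkQ)
    (ψ := (extendSubmodule S f B).mkQ) (fun _ => rfl) A
  exact ⟨hbase.equiv.trans (.ofEq _ _ hmap)⟩

end ExtendSubmodule

section AwayChange

variable {R S : Type*} [CommRing R] [CommRing S] [Algebra R S]

lemma isLocalizationAway_pow (y : S) {n : ℕ} (hn : n ≠ 0) (T : Type*) [CommRing T] [Algebra S T]
    [IsLocalization.Away y T] : IsLocalization.Away (y ^ n) T := by
  refine (IsLocalization.iff_of_le_of_exists_dvd (Submonoid.powers (y ^ n))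
    (Submonoid.powers y) ?_ ?_).2 ‹_›
  · exact Submonoid.powers_le.2 ⟨n, rfl⟩
  · rintro _ ⟨k, rfl⟩
    refine ⟨_, ⟨k, rfl⟩, ?_⟩
    simpa only [← pow_mul] using pow_dvd_pow y (Nat.le_mul_of_pos_left k hn.bot_lt)

variable {x : R} {y : S} {n : ℕ}

/-- The map `R_x → S_y` induced by `R → S` when `x` maps to a power of `y`. -/
noncomputable def awayChange (hxy : algebraMap R S x = y ^ n) :
    Localization.Away x →ₐ[R] Localization.Away y :=
  IsLocalization.Away.liftAlgHom x (f := Algebra.ofId R (Localization.Away y)) <| by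
    rw [Algebra.ofId_apply, IsScalarTower.algebraMap_apply R S, hxy, map_pow]
    exact IsLocalization.Away.algebraMap_pow_isUnit y n

lemma awayChange_invSelf (hxy : algebraMap R S x = y ^ n) :
    awayChange hxy (IsLocalization.Away.invSelf x) = IsLocalization.Away.invSelf y ^ n := by
  have hunit := IsLocalization.Away.algebraMap_pow_isUnit (S := Localization.Away y) y n
  refine hunit.mul_left_cancel ?_
  rw [← mul_pow, IsLocalization.Away.mul_invSelf, one_pow, ← map_pow, ← hxy,
    ← IsScalarTower.algebraMap_apply, ← (awayChange hxy).commutes, ← map_mul,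
    IsLocalization.Away.mul_invSelf, map_one]

lemma isBaseChange_awayChange (hxy : algebraMap R S x = y ^ n) (hn : n ≠ 0) :
    IsBaseChange S (awayChange hxy).toLinearMap := by
  let : Algebra (Localization.Away x) (Localization.Away y) := (awayChange hxy).toRingHom.toAlgebra
  have : IsScalarTower R (Localization.Away x) (Localization.Away y) :=
    .of_algebraMap_eq fun r => ((awayChange hxy).commutes r).symm
  have : IsLocalization (Algebra.algebraMapSubmonoid S (Submonoid.powers x))
      (Localization.Away y) := by
    rw [Algebra.algebraMapSubmonoid_powers, hxy]
    exact isLocalizationAway_pow y hn _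
  exact (Algebra.isPushout_of_isLocalization (Submonoid.powers x) (Localization.Away x) S
    (Localization.Away y)).out

end AwayChange

section CechChange

variable {R S : Type} [CommRing R] [CommRing S] [Algebra R S] {t n : ℕ}
  {g : Fin t → R} {h : Fin t → S}

lemma algebraMap_cechProd (hgh : ∀ i, algebraMap R S (g i) = h i ^ n) (s : Finset (Fin t)) :
    algebraMap R S (cechProd g s) = cechProd h s ^ n := by
  simp only [map_prod, hgh, Finset.prod_pow]

/-- The map from the Čech complex of `R` on `g` to the Čech complex of `S` on `h` induced by
`R → S` when every `g i` maps to `h i ^ n`. -/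
noncomputable def cechChange (hgh : ∀ i, algebraMap R S (g i) = h i ^ n) (j : ℕ) :
    CechTerm g j →ₗ[R] CechTerm h j :=
  .pi fun s => (awayChange (algebraMap_cechProd hgh s)).toLinearMap ∘ₗ .proj s

variable (hgh : ∀ i, algebraMap R S (g i) = h i ^ n)
include hgh

lemma awayChange_cechρ {s s' : Finset (Fin t)} (hs : s ⊆ s')
    (z : Localization.Away (cechProd g s)) :
    awayChange (algebraMap_cechProd hgh s') (cechρ g hs z) =
      cechρ h hs (awayChange (algebraMap_cechProd hgh s) z) := by
  let ρg := IsLocalization.Away.lift (S := Localization.Away (cechProd g s)) (cechProd g s)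
    (IsLocalization.Away.isUnit_of_dvd (S := Localization.Away (cechProd g s')) (cechProd g s')
      (Finset.prod_dvd_prod_of_subset _ _ g hs))
  let ρh := IsLocalization.Away.lift (S := Localization.Away (cechProd h s)) (cechProd h s)
    (IsLocalization.Away.isUnit_of_dvd (S := Localization.Away (cechProd h s')) (cechProd h s')
      (Finset.prod_dvd_prod_of_subset _ _ h hs))
  suffices (awayChange (algebraMap_cechProd hgh s')).toRingHom.comp ρg =
      ρh.comp (awayChange (algebraMap_cechProd hgh s)).toRingHom from DFunLike.congr_fun this z
  refine IsLocalization.ringHom_ext (Submonoid.powers (cechProd g s)) (RingHom.ext fun r => ?_)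
  simp [ρg, ρh, IsScalarTower.algebraMap_apply R S (Localization.Away (cechProd h _))]

lemma cechChange_cechD (j : ℕ) (x : CechTerm g j) :
    cechChange hgh (j + 1) (cechD g j x) = cechD h j (cechChange hgh j x) := by
  ext s
  have hsign (k : ℕ) (z : Localization.Away (cechProd h s)) :
      (-1 : R) ^ k • z = (-1 : S) ^ k • z := by
    rw [← algebraMap_smul S, map_pow, map_neg, map_one]
  simp only [cechChange, cechD, LinearMap.pi_apply, LinearMap.coe_comp, AlgHom.coe_toLinearMap,
    LinearMap.coe_proj, Function.comp_apply, Function.eval, LinearMap.coe_sum, LinearMap.coe_smul,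
    Finset.sum_apply, Pi.smul_apply, map_sum, map_smul, awayChange_cechρ hgh, hsign]

lemma isBaseChange_cechChange (hn : n ≠ 0) (j : ℕ) : IsBaseChange S (cechChange hgh j) :=
  .pi _ fun s => isBaseChange_awayChange (algebraMap_cechProd hgh s) hn

lemma extendSubmodule_cechTrunc (q j : ℕ) :
    extendSubmodule S (cechChange hgh j) (cechTrunc g q j) = cechTrunc h (n * q) j := by
  simp only [cechChange, cechTrunc, extendSubmodule_pi, extendSubmodule_span, Set.image_singleton,
    AlgHom.toLinearMap_apply, map_pow, awayChange_invSelf, pow_mul]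

lemma extendSubmodule_cechPrevRange (hn : n ≠ 0) :
    ∀ j, extendSubmodule S (cechChange hgh j) (cechPrevRange g j) = cechPrevRange h j
  | 0 => by simp [extendSubmodule, cechPrevRange]
  | j + 1 => extendSubmodule_range (isBaseChange_cechChange hgh hn j) (cechChange_cechD hgh j)

end CechChange

section CechTruncation

variable {R : Type} [CommRing R] {t : ℕ}

lemma span_invSelf_pow_mono (x : R) :
    Monotone fun q => Submodule.span R
      {(IsLocalization.Away.invSelf (S := Localization.Away x) x) ^ q} := by
  refine fun q q' hq => (Submodule.span_singleton_le_iff_mem _ _).2 ?_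
  obtain ⟨d, rfl⟩ := Nat.exists_eq_add_of_le hq
  refine Submodule.mem_span_singleton.2 ⟨x ^ d, ?_⟩
  rw [Algebra.smul_def, map_pow, pow_add, mul_left_comm, ← mul_pow,
    IsLocalization.Away.mul_invSelf, one_pow, mul_one]

lemma exists_mem_span_invSelf_pow {x : R} (z : Localization.Away x) :
    ∃ q, z ∈ Submodule.span R {(IsLocalization.Away.invSelf (S := Localization.Away x) x) ^ q} := by
  obtain ⟨q, a, ha⟩ := IsLocalization.Away.surj x z
  refine ⟨q, Submodule.mem_span_singleton.2 ⟨a, ?_⟩⟩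
  rw [Algebra.smul_def, ← ha, mul_assoc, ← mul_pow, IsLocalization.Away.mul_invSelf, one_pow,
    mul_one]

variable (g : Fin t → R)

lemma cechTrunc_mono (j : ℕ) : Monotone fun q => cechTrunc g q j :=
  fun _ _ hq => Submodule.pi_mono fun _ _ => span_invSelf_pow_mono _ hq

lemma exists_mem_cechTrunc {j : ℕ} (x : CechTerm g j) : ∃ q, x ∈ cechTrunc g q j := by
  choose q hq using fun s => exists_mem_span_invSelf_pow (x s)
  exact ⟨Finset.univ.sup q, fun s _ =>
    span_invSelf_pow_mono _ (Finset.le_sup (Finset.mem_univ s)) (hq s)⟩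

lemma fg_cechTrunc (q j : ℕ) : (cechTrunc g q j).FG :=
  Submodule.fg_pi fun _ => Submodule.fg_span_singleton _

theorem iSup_cechHTrunc_pow {p : ℕ} (hp : 1 < p) (j : ℕ) :
    ⨆ e, cechHTrunc g (p ^ e) j = ⊤ := by
  refine eq_top_iff.2 fun x _ => ?_
  obtain ⟨z, rfl⟩ := Submodule.mkQ_surjective _ x
  obtain ⟨q, hq⟩ := exists_mem_cechTrunc g z.1
  exact Submodule.mem_iSup_of_mem q ⟨z, cechTrunc_mono g j (Nat.lt_pow_self hp).le hq, rfl⟩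

end CechTruncation

section Subquotient

variable {R M : Type*} [CommRing R] [AddCommGroup M] [Module R M]

/-- The second isomorphism theorem `A / (A ∩ B) ≃ (A + B) / B`, the target being written as the
image of `A` in `M ⧸ B`. -/
noncomputable def quotientComapSubtypeEquiv (A B : Submodule R M) :
    (A ⧸ B.comap A.subtype) ≃ₗ[R] A.map B.mkQ :=
  (Submodule.quotEquivOfEq _ _ (by
      rw [LinearMap.domRestrict, LinearMap.ker_comp, Submodule.ker_mkQ])).trans <|
    (B.mkQ.domRestrict A).quotKerEquivRange.trans (.ofEq _ _ (LinearMap.range_domRestrict _ _))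

/-- The image of `A` in the quotient of `K` by `B`, identified with a submodule of `M ⧸ B`. -/
noncomputable def mapMkQComapSubtypeEquiv (K A B : Submodule R M) :
    (A.comap K.subtype).map (B.comap K.subtype).mkQ ≃ₗ[R] (K ⊓ A).map B.mkQ :=
  (Submodule.equivMapOfInjective ((B.comap K.subtype).mapQ B K.subtype le_rfl)
    (LinearMap.ker_eq_bot.1 (Submodule.ker_liftQ_eq_bot _ _ _ (by
      rw [LinearMap.ker_comp, Submodule.ker_mkQ]))) _).trans <| .ofEq _ _ <| by
    rw [← Submodule.map_comp, Submodule.mapQ_mkQ, Submodule.map_comp, Submodule.map_comap_subtype]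

end Subquotient

section CechHTrunc

variable {R S : Type} [CommRing R] [CommRing S] {t : ℕ}

open LinearMap

/-- `Ȟ^j_q`, as a submodule of the cokernel of the Čech differential `δ^{j-1}`. -/
noncomputable def cechHTruncEquiv (g : Fin t → R) (q j : ℕ) :
    cechHTrunc g q j ≃ₗ[R] (ker (cechD g j) ⊓ cechTrunc g q j).map (cechPrevRange g j).mkQ :=
  mapMkQComapSubtypeEquiv _ _ _

theorem finite_cechHTrunc [IsNoetherianRing R] (g : Fin t → R) (q j : ℕ) :
    Module.Finite R (cechHTrunc g q j) := by
  have hfg : (ker (cechD g j) ⊓ cechTrunc g q j).FG := (fg_cechTrunc g q j).of_le inf_le_right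
  have : Module.Finite R ((ker (cechD g j) ⊓ cechTrunc g q j).map (cechPrevRange g j).mkQ) :=
    Module.Finite.iff_fg.2 (hfg.map _)
  exact .equiv (cechHTruncEquiv g q j).symm

lemma extendSubmodule_ker_inf_cechTrunc [Algebra R S] [Module.Flat R S] {g : Fin t → R}
    {h : Fin t → S} {n : ℕ} (hn : n ≠ 0) (hgh : ∀ i, algebraMap R S (g i) = h i ^ n) (q j : ℕ) :
    extendSubmodule S (cechChange hgh j) (ker (cechD g j) ⊓ cechTrunc g q j) =
      ker (cechD h j) ⊓ cechTrunc h (n * q) j := by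
  rw [extendSubmodule_inf (isBaseChange_cechChange hgh hn j), extendSubmodule_cechTrunc,
    extendSubmodule_ker (isBaseChange_cechChange hgh hn j)
      (isBaseChange_cechChange hgh hn (j + 1)) (cechChange_cechD hgh j)]

theorem nonempty_extendScalars_cechHTrunc_iso {φ : R →+* S} (hφ : φ.Flat) {g : Fin t → R}
    {h : Fin t → S} {n : ℕ} (hn : n ≠ 0) (hgh : ∀ i, φ (g i) = h i ^ n) (q j : ℕ) :
    Nonempty ((ModuleCat.extendScalars φ).obj (.of R (cechHTrunc g q j)) ≅
      .of S (cechHTrunc h (n * q) j)) := by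
  algebraize [φ]
  obtain ⟨e⟩ := nonempty_tensorProduct_map_mkQ_equiv (isBaseChange_cechChange hgh hn j)
    (extendSubmodule_ker_inf_cechTrunc hn hgh q j) (extendSubmodule_cechPrevRange hgh hn j)
  exact ⟨(((cechHTruncEquiv g q j).baseChange R S _ _).trans
    (e.trans (cechHTruncEquiv h (n * q) j).symm)).toModuleIso⟩

end CechHTrunc

/-- Let `R` be a noetherian regular ring of characteristic `p`, `I = (g1,…,gt)`, `e ≥ 0`.
Let `Ȟ^j_e` be the image of `H^j(Č^•(g;R)_e)` in `H^j_I(R)`. Then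
`Ȟ^j_e ≅ ker δ^j_e / (im δ^{j-1} ∩ ker δ^j_e)`, `F(Ȟ^j_e) ≅ Ȟ^j_{e+1}`, each `Ȟ^j_e` is a
finitely generated `R`-module, and `H^j_I(R) = ∪_e Ȟ^j_e`. -/
theorem stmt_12 {R : Type} [CommRing R] (p : ℕ) [Fact p.Prime] [CharP R p]
    (hreg : IsRegularRingStmt R) {t : ℕ} (g : Fin t → R) (j : ℕ) :
    (∀ e : ℕ, Nonempty
      (↥(cechHTrunc g (p ^ e) j) ≃ₗ[R]
        ↥(LinearMap.ker (cechD g j) ⊓ cechTrunc g (p ^ e) j) ⧸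
          Submodule.comap (LinearMap.ker (cechD g j) ⊓ cechTrunc g (p ^ e) j).subtype
            (cechPrevRange g j))) ∧
    (∀ e : ℕ, Nonempty
      ((ModuleCat.extendScalars (frobenius R p)).obj
          (ModuleCat.of R ↥(cechHTrunc g (p ^ e) j)) ≅
        ModuleCat.of R ↥(cechHTrunc g (p ^ (e + 1)) j))) ∧
    (∀ e : ℕ, Module.Finite R ↥(cechHTrunc g (p ^ e) j)) ∧
    (⨆ e : ℕ, cechHTrunc g (p ^ e) j) = ⊤ := by
  have hp : p.Prime := Fact.out
  have : IsRegularRing R := isRegularRing_of_isRegularRingStmt hreg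
  have : IsNoetherianRing R := hreg.1
  refine ⟨fun e => ⟨(cechHTruncEquiv g (p ^ e) j).trans (quotientComapSubtypeEquiv _ _).symm⟩,
    fun e => ?_, fun e => finite_cechHTrunc g (p ^ e) j, iSup_cechHTrunc_pow g hp.one_lt j⟩
  rw [pow_succ']
  exact nonempty_extendScalars_cechHTrunc_iso (flat_frobenius_of_isRegularRing R p) hp.ne_zero
    (frobenius_def p <| g ·) (p ^ e) j
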